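/- Let d ≥ 2, let K be a convex body in ℝ^d, and let N be a closed subset of the unit sphere S^{d-1}. Suppose that for every ε > 0 there exist finitely many unit vectors u_1, …, u_m ∈ N and real numbers t_1, …, t_m with h(K, u_i) ≤ t_i for all i (so each closed halfspace {x : ⟨x, u_i⟩ ≤ t_i} contains K) such that ⋂_{i=1}^m {x ∈ ℝ^d : ⟨x, u_i⟩ ≤ t_i} ⊆ {x ∈ ℝ^d : dist(x, K) ≤ ε}. Then for every boundary point x of K at which K has a unique outer unit normal vector u (i.e. u is the unique unit vector with ⟨z, u⟩ ≤ ⟨x, u⟩ for all z ∈ K), one has u ∈ N. -/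

import Mathlib

open Metric Set
open scoped InnerProductSpace

/-- The support function of a set `K`: `h(K, u) = sup_{x ∈ K} ⟪x, u⟫`. -/
noncomputable def suppFn {d : ℕ} (K : Set (EuclideanSpace ℝ (Fin d)))
    (u : EuclideanSpace ℝ (Fin d)) : ℝ :=
  sSup ((fun x => ⟪x, u⟫_ℝ) '' K)

open Filter Topology

lemma inner_le_suppFn {d : ℕ} {K : Set (EuclideanSpace ℝ (Fin d))} (hK : IsCompact K)
    {z : EuclideanSpace ℝ (Fin d)} (hz : z ∈ K) (v : EuclideanSpace ℝ (Fin d)) :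
    ⟪z, v⟫_ℝ ≤ suppFn K v :=
  le_csSup (hK.image (by fun_prop)).bddAbove (mem_image_of_mem _ hz)

/-- If `K` is approximated from outside by polyhedra with normals in `N`, then every point outside
`K` is separated from `K` by a hyperplane with normal in `N`. -/
lemma exists_mem_forall_inner_le_of_notMem {d : ℕ} {K N : Set (EuclideanSpace ℝ (Fin d))}
    (hK : IsCompact K) (hne : K.Nonempty)
    (happrox : ∀ ε : ℝ, 0 < ε → ∃ (m : ℕ) (u : Fin m → EuclideanSpace ℝ (Fin d)) (t : Fin m → ℝ),
      (∀ i, ‖u i‖ = 1) ∧ (∀ i, u i ∈ N) ∧ (∀ i, suppFn K (u i) ≤ t i) ∧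
      (⋂ i, {x : EuclideanSpace ℝ (Fin d) | ⟪x, u i⟫_ℝ ≤ t i}) ⊆
        {x : EuclideanSpace ℝ (Fin d) | infDist x K ≤ ε})
    {y : EuclideanSpace ℝ (Fin d)} (hy : y ∉ K) :
    ∃ v ∈ N, ∀ z ∈ K, ⟪z, v⟫_ℝ ≤ ⟪y, v⟫_ℝ := by
  have hpos := (hK.isClosed.notMem_iff_infDist_pos hne).1 hy
  obtain ⟨m, u, t, -, huN, hut, hsub⟩ := happrox (infDist y K / 2) (half_pos hpos)
  have hnot : y ∉ ⋂ i, {x : EuclideanSpace ℝ (Fin d) | ⟪x, u i⟫_ℝ ≤ t i} := fun hmem =>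
    (half_lt_self hpos).not_ge (hsub hmem)
  simp only [mem_iInter, mem_ofPred_eq, not_forall, not_le] at hnot
  obtain ⟨i, hi⟩ := hnot
  exact ⟨u i, huN i, fun z hz => (inner_le_suppFn hK hz _).trans ((hut i).trans hi.le)⟩

theorem statement13 {d : ℕ} (hd : 2 ≤ d) (K : Set (EuclideanSpace ℝ (Fin d)))
    (hKcomp : IsCompact K) (hKconv : Convex ℝ K) (hKint : (interior K).Nonempty)
    (N : Set (EuclideanSpace ℝ (Fin d))) (hNclosed : IsClosed N)
    (hNsub : N ⊆ sphere (0 : EuclideanSpace ℝ (Fin d)) 1)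
    (happrox : ∀ ε : ℝ, 0 < ε → ∃ (m : ℕ) (u : Fin m → EuclideanSpace ℝ (Fin d)) (t : Fin m → ℝ),
      (∀ i, ‖u i‖ = 1) ∧ (∀ i, u i ∈ N) ∧ (∀ i, suppFn K (u i) ≤ t i) ∧
      (⋂ i, {x : EuclideanSpace ℝ (Fin d) | ⟪x, u i⟫_ℝ ≤ t i}) ⊆
        {x : EuclideanSpace ℝ (Fin d) | infDist x K ≤ ε}) :
    ∀ x ∈ frontier K, ∀ u : EuclideanSpace ℝ (Fin d), ‖u‖ = 1 →
      (∀ z ∈ K, ⟪z, u⟫_ℝ ≤ ⟪x, u⟫_ℝ) →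
      (∀ u' : EuclideanSpace ℝ (Fin d), ‖u'‖ = 1 →
        (∀ z ∈ K, ⟪z, u'⟫_ℝ ≤ ⟪x, u'⟫_ℝ) → u' = u) →
      u ∈ N := by
  intro x hx u hu hsupp huniq
  have hxK : x ∈ K := hKcomp.isClosed.frontier_subset hx
  have hNcomp : IsCompact N := (isCompact_sphere 0 1).of_isClosed_subset hNclosed hNsub
  have hsep (s : ℝ) (hs : 0 < s) : ∃ v ∈ N, ∀ z ∈ K, ⟪z, v⟫_ℝ ≤ ⟪x + s • u, v⟫_ℝ := by
    apply exists_mem_forall_inner_le_of_notMem hKcomp ⟨x, hxK⟩ happrox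
    intro hmem
    have h := hsupp _ hmem
    rw [inner_add_left, real_inner_smul_left, real_inner_self_eq_norm_sq, hu] at h
    linarith
  choose v hvN hv using fun n : ℕ => hsep (1 / ((n : ℝ) + 1)) Nat.one_div_pos_of_nat
  obtain ⟨w, hwN, φ, hφ, hlim⟩ := hNcomp.tendsto_subseq hvN
  have hpts : Tendsto (fun n => x + (1 / ((φ n : ℝ) + 1)) • u) atTop (𝓝 x) := by
    simpa using (tendsto_const_nhds (x := x)).add
      (((tendsto_one_div_add_atTop_nhds_zero_nat (𝕜 := ℝ)).comp hφ.tendsto_atTop).smul_const u)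
  have hw : w = u := huniq w (by simpa using hNsub hwN) fun z hz =>
    le_of_tendsto_of_tendsto' (tendsto_const_nhds.inner hlim) (hpts.inner hlim)
      fun n => hv (φ n) z hz
  exact hw ▸ hwN
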